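/- arXiv:1503.00918 — 3 statements merged into one kernel-verified Lean document; each statement's English description precedes it below -/
import Mathlib

section
/- For every c1, c2 ∈ K, the (c1,c2)-swapping bracket on Z(P) is a Poisson bracket: it is an antisymmetric biderivation in each argument and satisfies the Jacobi identity {a,{b,c}} + {b,{c,a}} + {c,{a,b}} = 0 for all a, b, c ∈ Z(P). -/
noncomputable section

open scoped Classical
open MvPolynomial

set_option maxHeartbeats 1000000
set_option synthInstance.maxHeartbeats 400000

instance fact01 : Fact ((0:ℝ) < 1) := ⟨one_pos⟩

/-- The circle, modelled as `ℝ/ℤ`. -/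
abbrev Circle1 : Type := AddCircle (1:ℝ)

/-- The coordinate in `[0,1)` of the point `x` of the circle obtained after removing the
point `o` and identifying the complement of `o` with an interval. -/
def coordAt (o x : Circle1) : ℝ := ((AddCircle.equivIco 1 0) (x - o) : ℝ)

/-- The sign `△` of a real number, as a rational number in `{-1, 0, 1}`. -/
def sgnQ (a : ℝ) : ℚ := if a < 0 then -1 else if a = 0 then 0 else 1

/-- The linking number `J(rx, sy)` of the chords `rx` and `sy`, computed using the
cut point `o`. -/
def linkingAt (o r x s y : Circle1) : ℚ :=
  (1/2) * (sgnQ (coordAt o r - coordAt o x) * sgnQ (coordAt o r - coordAt o y)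
        * sgnQ (coordAt o y - coordAt o x)
      - sgnQ (coordAt o r - coordAt o x) * sgnQ (coordAt o r - coordAt o s)
        * sgnQ (coordAt o s - coordAt o x))

lemma circle1_infinite : Infinite Circle1 := by
  have h : (Set.Ico (0:ℝ) (0+1)).Infinite := Set.Ico_infinite (by norm_num)
  haveI := h.to_subtype
  exact Infinite.of_injective (fun q : Set.Ico (0:ℝ) (0+1) => (AddCircle.equivIco 1 0).symm q)
    ((AddCircle.equivIco 1 0).symm.injective)

lemma exists_cut (r x s y : Circle1) :
    ∃ o : Circle1, o ≠ r ∧ o ≠ x ∧ o ≠ s ∧ o ≠ y := by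
  haveI : Infinite Circle1 := circle1_infinite
  have hfin : ({r, x, s, y} : Set Circle1).Finite :=
    (((Set.finite_singleton y).insert s).insert x).insert r
  obtain ⟨o, ho⟩ := hfin.infinite_compl.nonempty
  simp only [Set.mem_compl_iff, Set.mem_insert_iff, Set.mem_singleton_iff, not_or] at ho
  exact ⟨o, ho.1, ho.2.1, ho.2.2.1, ho.2.2.2⟩

/-- The linking number `J(rx, sy)` of the chords `rx` and `sy` (computed with respect to
some cut point distinct from the four points; by the independence of the choice this is
the linking number). -/
def linkQ (r x s y : Circle1) : ℚ := linkingAt (exists_cut r x s y).choose r x s y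

/-- The set of points of the circle `l`, listed in anticlockwise (cyclic) order:
there is a cut point `o` avoiding them such that the induced coordinates are
strictly increasing along the list. -/
def AnticlockwiseList (l : List Circle1) : Prop :=
  ∃ o : Circle1, (∀ p ∈ l, p ≠ o) ∧ (l.map (coordAt o)).Chain' (· < ·)

/-- Index type for the generators `xy` of the swapping ring of `P`
(one generator for each ordered pair of distinct points; the generators `xx`
are identified with `0`). -/
abbrev SwapIdx (P : Set Circle1) : Type := {q : (↥P) × (↥P) // q.1 ≠ q.2}

/-- The swapping ring `Z(P)`: the polynomial ring over `K` on the generators `xy`,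
`x ≠ y ∈ P` (this realizes the commutative ring generated by all ordered pairs `xy`
subject to the relations `xx = 0`). -/
abbrev SwapRing (K : Type) [Field K] (P : Set Circle1) : Type := MvPolynomial (SwapIdx P) K

/-- The generator `xy` of the swapping ring (equal to `0` when `x = y`). -/
def gen (K : Type) [Field K] (P : Set Circle1) (x y : ↥P) : SwapRing K P :=
  if h : x ≠ y then MvPolynomial.X (⟨(x, y), h⟩ : SwapIdx P) else 0

/-- The value of the `(c1,c2)`-swapping bracket on two generators `rx` and `sy`:
`J(rx,sy) • (c1 • ry·sx + c2 • rx·sy)`. -/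
def genBr (K : Type) [Field K] (P : Set Circle1) (c1 c2 : K) (g g' : SwapIdx P) :
    SwapRing K P :=
  ((linkQ g.1.1.1 g.1.2.1 g'.1.1.1 g'.1.2.1 : ℚ) : K) •
    (c1 • (gen K P g.1.1 g'.1.2 * gen K P g'.1.1 g.1.2)
      + c2 • (gen K P g.1.1 g.1.2 * gen K P g'.1.1 g'.1.2))

/-- The `(c1,c2)`-swapping bracket on `Z(P)`: the biderivation extending
`{rx, sy} = J(rx,sy)·(c1·ry·sx + c2·rx·sy)` by the Leibniz rule in each argument.
The swapping bracket is the case `c1 = 1, c2 = 0`. -/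
def swapBr (K : Type) [Field K] (P : Set Circle1) (c1 c2 : K) (a b : SwapRing K P) :
    SwapRing K P :=
  (MvPolynomial.mkDerivation K
    (fun g : SwapIdx P => (MvPolynomial.mkDerivation K (genBr K P c1 c2 g)) b)) a

/-- `Δ((x_1,…,x_m),(y_1,…,y_m)) = det (x_i y_j)` in the swapping ring. -/
def Dmat (K : Type) [Field K] (P : Set Circle1) (m : ℕ) (xs ys : Fin m → ↥P) :
    SwapRing K P :=
  Matrix.det (Matrix.of fun i j => gen K P (xs i) (ys j))

/-- The ideal `R_n(P)` of `Z(P)` generated by all `(n+1)×(n+1)` determinants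
`Δ((x_1,…,x_{n+1}),(y_1,…,y_{n+1}))`. -/
def Rideal (K : Type) [Field K] (P : Set Circle1) (n : ℕ) : Ideal (SwapRing K P) :=
  Ideal.span {D : SwapRing K P | ∃ xs ys : Fin (n+1) → ↥P, D = Dmat K P (n+1) xs ys}

/-- The rank `n` swapping ring `Z_n(P) = Z(P)/R_n(P)`. -/
abbrev ZnRing (K : Type) [Field K] (P : Set Circle1) (n : ℕ) : Type :=
  SwapRing K P ⧸ Rideal K P n

/-- The quotient map `Z(P) → Z_n(P)`. -/
def toZn (K : Type) [Field K] (P : Set Circle1) (n : ℕ) :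
    SwapRing K P →+* ZnRing K P n := Ideal.Quotient.mk (Rideal K P n)

/-- The total fraction ring `Q_n(P)` of the rank `n` swapping ring. -/
abbrev QnRing (K : Type) [Field K] (P : Set Circle1) (n : ℕ) : Type :=
  Localization (nonZeroDivisors (ZnRing K P n))

/-- The canonical map `Z(P) → Q_n(P)`. -/
def toQn (K : Type) [Field K] (P : Set Circle1) (n : ℕ) :
    SwapRing K P →+* QnRing K P n :=
  (algebraMap (ZnRing K P n) (QnRing K P n)).comp (toZn K P n)

/-- `Bq` is the extension to the total fraction ring `Q_n(P)` of the `(c1,c2)`-swapping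
bracket of the rank `n` swapping algebra: it agrees with the swapping bracket on the image
of `Z(P)` and satisfies the Leibniz rule in both arguments (these properties determine it
uniquely). -/
def IsQnBracket (K : Type) [Field K] (P : Set Circle1) (n : ℕ) (c1 c2 : K)
    (Bq : QnRing K P n → QnRing K P n → QnRing K P n) : Prop :=
  (∀ a b : SwapRing K P,
      Bq (toQn K P n a) (toQn K P n b) = toQn K P n (swapBr K P c1 c2 a b)) ∧
  (∀ a b c : QnRing K P n, Bq (a * b) c = a * Bq b c + b * Bq a c) ∧
  (∀ a b c : QnRing K P n, Bq a (b * c) = b * Bq a c + c * Bq a b)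

/-- The `n`-tuple `(x_1, …, x_a, y_1, …, y_b, z_1, …, z_{n-a-b})` built from three
families of points (families are indexed from `0`, i.e. `x 0 = x_1`). -/
def rows3 {α : Type*} {n : ℕ} (x y z : ℕ → α) (a b : ℕ) : Fin n → α :=
  fun i => if (i : ℕ) < a then x (i : ℕ)
    else if (i : ℕ) < a + b then y ((i : ℕ) - a)
    else z ((i : ℕ) - (a + b))

/-- The `n`-tuple `(x_1, …, x_a, y_1, …, y_b, z_1, …, z_{n-1-a-b}, w)` built from three
families of points and a final point `w`. -/
def rows3s {α : Type*} {n : ℕ} (x y z : ℕ → α) (a b : ℕ) (w : α) : Fin n → α :=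
  fun i => if (i : ℕ) < a then x (i : ℕ)
    else if (i : ℕ) < a + b then y ((i : ℕ) - a)
    else if (i : ℕ) < n - 1 then z ((i : ℕ) - (a + b))
    else w

/-- The `n`-tuple `(x_1, …, x_{n-1}, t)`. -/
def snocTup {α : Type*} {n : ℕ} (x : ℕ → α) (t : α) : Fin n → α :=
  fun i => if (i : ℕ) < n - 1 then x (i : ℕ) else t

/-- The list `f_a, f_{a-1}, …, f_1` (descending enumeration). -/
def descPts (f : ℕ → Circle1) (a : ℕ) : List Circle1 := ((List.range a).map f).reverse

/-- The list `f_1, f_2, …, f_a` (ascending enumeration). -/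
def ascPts (f : ℕ → Circle1) (a : ℕ) : List Circle1 := (List.range a).map f

/-- The `(n×n)`-determinant quotient `Δ(numR, v)/Δ(denR, v)` as an element of the total
fraction ring `Q_n(P)`. -/
def EQuot (K : Type) [Field K] (P : Set Circle1) (n : ℕ)
    (numR denR v : Fin n → ↥P)
    (h : toZn K P n (Dmat K P n denR v) ∈ nonZeroDivisors (ZnRing K P n)) :
    QnRing K P n :=
  Localization.mk (toZn K P n (Dmat K P n numR v)) ⟨toZn K P n (Dmat K P n denR v), h⟩


/-!
Cut the circle and let `ε a b` be the sign of the difference of the coordinates of `a` and `b`.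
Signs satisfy `ε ab · ε bc · ε ca = -(ε ab + ε bc + ε ca)`, so the linking number, although defined
by cubic expressions, is bilinear in the two chords: `2 J(rx, sy) = ε ry - ε rs - ε xy + ε xs`.

The Jacobiator is a derivation in each argument, so it suffices to evaluate it on generators
`rx, sy, tz`. Its `c1 c2` part vanishes by the bilinearity of `J` and its `c2 ^ 2` part by
antisymmetry. In the `c1 ^ 2` part, the coefficient of `sz · ry · tx` is a signed sum of terms
`ε ab · ε bc + ε bc · ε ca + ε ca · ε ab`, each of which is `-1`, or `0` if `a = b = c`. Up to
coincidences at which `sz · ry · tx = 0`, this leaves `(δ_{xyz} - δ_{rst}) / 4`. The only other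
monomial `ty · rz · sx` has the opposite coefficient, and if `x = y = z` or `r = s = t` the two
monomials are equal.
-/

section Biderivation

variable {R A : Type*} [CommRing R] [CommRing A] [Algebra R A]

/-- An `R`-bilinear bracket on `A` which is a derivation in each argument, curried as `a ↦ D a`. -/
abbrev Biderivation (R A : Type*) [CommRing R] [CommRing A] [Algebra R A] : Type _ :=
  Derivation R A (Derivation R A A)

namespace Biderivation

/-- The bracket with its two arguments exchanged. -/
def flip (D : Biderivation R A) : Biderivation R A :=
  Derivation.mk'
    { toFun := fun b => Derivation.mk'
        { toFun := fun a => D a b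
          map_add' := fun a a' => by rw [map_add, Derivation.add_apply]
          map_smul' := fun k a => by
            rw [Derivation.map_smul, Derivation.smul_apply, RingHom.id_apply] }
        fun a a' => by
          simp only [LinearMap.coe_mk, AddHom.coe_mk, Derivation.leibniz, Derivation.add_apply,
            Derivation.smul_apply]
      map_add' := fun b b' => by ext a; exact (D a).map_add b b'
      map_smul' := fun k b => by ext a; exact (D a).map_smul k b }
    fun b b' => by ext a; exact (D a).leibniz b b'

@[simp]
lemma flip_apply (D : Biderivation R A) (a b : A) : D.flip b a = D a b := rfl

/-- The cyclic sum whose vanishing is the Jacobi identity. -/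
def jacobiator (D : Biderivation R A) (a b c : A) : A :=
  D a (D b c) + D b (D c a) + D c (D a b)

lemma jacobiator_rotate (D : Biderivation R A) (a b c : A) :
    D.jacobiator b c a = D.jacobiator a b c := by
  unfold jacobiator
  ring

lemma jacobiator_eq_lie_sub_apply {D : Biderivation R A} (hD : D.flip = -D) (a b c : A) :
    D.jacobiator a b c = (⁅D a, D b⁆ - D (D a b)) c := by
  have antisymm (u v : A) : D u v = -D v u := congr($hD v u)
  rw [Derivation.sub_apply, Derivation.commutator_apply, jacobiator, antisymm c a, map_neg,
    antisymm c]
  ring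

section MvPolynomial

variable {σ : Type*} {D E : Biderivation R (MvPolynomial σ R)}

lemma mvPolynomial_ext (h : ∀ i j, D (X i) (X j) = E (X i) (X j)) : D = E :=
  derivation_ext fun i => derivation_ext (h i)

lemma jacobiator_eq_zero_of_X_right (hD : D.flip = -D) {a b : MvPolynomial σ R}
    (h : ∀ k, D.jacobiator a b (X k) = 0) (c : MvPolynomial σ R) : D.jacobiator a b c = 0 := by
  simp only [jacobiator_eq_lie_sub_apply hD] at h ⊢
  have vanishes : ⁅D a, D b⁆ - D (D a b) = 0 := derivation_ext h
  rw [vanishes, Derivation.zero_apply]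

lemma jacobiator_eq_zero_of_X (hD : D.flip = -D)
    (h : ∀ i j k, D.jacobiator (X i) (X j) (X k) = 0) (a b c : MvPolynomial σ R) :
    D.jacobiator a b c = 0 := by
  have of_two_X (i j : σ) : ∀ c, D.jacobiator (X i) (X j) c = 0 :=
    jacobiator_eq_zero_of_X_right hD (h i j)
  have of_one_X (c : MvPolynomial σ R) (i : σ) : ∀ b, D.jacobiator c (X i) b = 0 :=
    jacobiator_eq_zero_of_X_right hD fun j => by rw [← jacobiator_rotate, of_two_X]
  rw [← jacobiator_rotate]
  exact jacobiator_eq_zero_of_X_right hD (fun i => by rw [← jacobiator_rotate, of_one_X]) a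

end MvPolynomial

end Biderivation

end Biderivation

section ChordPairing

variable {α R : Type*} [CommRing R]

/-- The pairing of the chords `ab` and `cd`, regarded as differences of points, under the
bilinear extension of `-ε`. For `ε` the order of the points of a cut circle this is twice the
linking number. -/
def chordPairing (ε : α → α → R) (a b c d : α) : R :=
  ε a d - ε a c - ε b d + ε b c

/-- The sum of the products of pairs of sides of the triangle `abc`. -/
def triangleSum (ε : α → α → R) (a b c : α) : R :=
  ε a b * ε b c + ε b c * ε c a + ε c a * ε a b

variable {ε : α → α → R}

lemma chordPairing_antisymm (hε : ∀ a b, ε a b = -ε b a) (a b c d : α) :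
    chordPairing ε a b c d = -chordPairing ε c d a b := by
  unfold chordPairing
  rw [hε c b, hε c a, hε d b, hε d a]
  ring

lemma chordPairing_cyclic_sum (hε : ∀ a b, ε a b = -ε b a) (r x s y t z : α) :
    chordPairing ε s y t z * chordPairing ε r x t y
        + chordPairing ε t z r x * chordPairing ε s y r z
        + chordPairing ε r x s y * chordPairing ε t z s x
      = triangleSum ε x y z - triangleSum ε r s t
        + (triangleSum ε r y t - triangleSum ε x y t) + (triangleSum ε s z r - triangleSum ε y z r)
        + (triangleSum ε t x s - triangleSum ε z x s) := by
  simp only [chordPairing, triangleSum, hε s r, hε t r, hε t s, hε y r, hε z r, hε x s, hε z s,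
    hε x t, hε y t, hε z x]
  ring

end ChordPairing

section LinkingNumber

lemma sgnQ_neg (a : ℝ) : sgnQ (-a) = -sgnQ a := by
  unfold sgnQ
  grind

lemma sgnQ_sub_mul_mul (a b c : ℝ) :
    sgnQ (a - b) * sgnQ (a - c) * sgnQ (c - b) = sgnQ (a - c) + sgnQ (c - b) - sgnQ (a - b) := by
  unfold sgnQ
  grind

lemma triangleSum_sgnQ_sub (a b c : ℝ) :
    triangleSum (fun u v => sgnQ (u - v)) a b c = (if a = b ∧ b = c then 1 else 0) - 1 := by
  unfold triangleSum sgnQ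
  grind

lemma coordAt_mem_Ico (o x : Circle1) : coordAt o x ∈ Set.Ico (0 : ℝ) 1 := by
  simpa only [zero_add] using! ((AddCircle.equivIco 1 0) (x - o)).2

lemma coe_coordAt (o x : Circle1) : (coordAt o x : Circle1) = x - o := AddCircle.coe_equivIco

lemma coordAt_injective (o : Circle1) : Function.Injective (coordAt o) := fun x y h =>
  sub_left_injective (b := o) <| by simp only [← coe_coordAt, h]

lemma coordAt_eq_fract (o o' x : Circle1) :
    coordAt o' x = Int.fract (coordAt o x + coordAt o' o) := by
  have lift : x - o' = ((coordAt o x + coordAt o' o : ℝ) : Circle1) := by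
    rw [AddCircle.coe_add, coe_coordAt, coe_coordAt, sub_add_sub_cancel]
  rw [coordAt, lift, AddCircle.coe_equivIco_mk_apply, div_one, mul_one]

/-- The order of the points `a` and `b` of the circle cut at `o`: `-1` if `a` comes first, `1` if
`b` does, and `0` if they coincide. -/
def cutSign (o a b : Circle1) : ℚ := sgnQ (coordAt o a - coordAt o b)

lemma cutSign_antisymm (o a b : Circle1) : cutSign o a b = -cutSign o b a := by
  rw [cutSign, cutSign, ← sgnQ_neg, neg_sub]

lemma triangleSum_cutSign (o a b c : Circle1) :
    triangleSum (cutSign o) a b c = (if a = b ∧ b = c then 1 else 0) - 1 := by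
  simp only [← (coordAt_injective o).eq_iff]
  exact triangleSum_sgnQ_sub _ _ _

lemma coordAt_eq_sub_ite (o o' x : Circle1) :
    coordAt o' x = coordAt o x + coordAt o' o
      - if coordAt o x + coordAt o' o < 1 then 0 else 1 := by
  obtain ⟨nonneg, lt_one⟩ := coordAt_mem_Ico o x
  obtain ⟨nonneg', lt_one'⟩ := coordAt_mem_Ico o' o
  rw [coordAt_eq_fract o o', Int.fract_eq_iff]
  split_ifs with h
  · exact ⟨by linarith, by linarith, 0, by simp⟩
  · exact ⟨by linarith, by linarith, 1, by simp⟩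

-- Moving the cut reverses the order of two points exactly when the new cut separates them.
lemma exists_cutSign_eq_mul (o o' : Circle1) :
    ∃ side : Circle1 → ℚ, (∀ a, side a * side a = 1) ∧
      ∀ a b, cutSign o' a b = side a * side b * cutSign o a b := by
  refine ⟨fun a => if coordAt o a + coordAt o' o < 1 then 1 else -1, by grind, fun a b => ?_⟩
  obtain ⟨nonneg_a, lt_one_a⟩ := coordAt_mem_Ico o a
  obtain ⟨nonneg_b, lt_one_b⟩ := coordAt_mem_Ico o b
  simp only [cutSign, sgnQ, coordAt_eq_sub_ite o o' a, coordAt_eq_sub_ite o o' b]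
  grind

lemma linkingAt_cut_indep (o o' r x s y : Circle1) :
    linkingAt o' r x s y = linkingAt o r x s y := by
  obtain ⟨side, side_mul_self, change⟩ := exists_cutSign_eq_mul o o'
  have triple (a b c : Circle1) : cutSign o' a b * cutSign o' a c * cutSign o' c b
      = cutSign o a b * cutSign o a c * cutSign o c b := by
    simp only [change]
    grind
  simp only [linkingAt, ← cutSign.eq_def, triple]

lemma linkQ_eq_chordPairing (o r x s y : Circle1) :
    linkQ r x s y = 1 / 2 * chordPairing (cutSign o) r x s y := by
  rw [linkQ, linkingAt_cut_indep o, chordPairing, cutSign_antisymm o x y, cutSign_antisymm o x s]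
  simp only [linkingAt, sgnQ_sub_mul_mul, cutSign]
  ring

lemma linkQ_antisymm (r x s y : Circle1) : linkQ r x s y = -linkQ s y r x := by
  rw [linkQ_eq_chordPairing 0, linkQ_eq_chordPairing 0,
    chordPairing_antisymm (cutSign_antisymm 0), mul_neg]

lemma linkQ_self_left (r s y : Circle1) : linkQ r r s y = 0 := by
  rw [linkQ_eq_chordPairing 0, chordPairing]
  ring

lemma linkQ_self_right (r x s : Circle1) : linkQ r x s s = 0 := by
  rw [linkQ_antisymm, linkQ_self_left, neg_zero]

lemma linkQ_add_linkQ_swap (r x s y t z : Circle1) :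
    linkQ r x t y + linkQ r x s z = linkQ r x t z + linkQ r x s y := by
  simp only [linkQ_eq_chordPairing 0, chordPairing]
  ring

/-- The coefficient with which `sz · ry · tx` enters the Jacobiator of `rx`, `sy`, `tz` for the
swapping bracket. -/
def jacobiCoeff (r x s y t z : Circle1) : ℚ :=
  linkQ s y t z * linkQ r x t y + linkQ t z r x * linkQ s y r z + linkQ r x s y * linkQ t z s x

lemma jacobiCoeff_eq_of_ne {r x s y t z : Circle1} (hsz : s ≠ z) (hry : r ≠ y) (htx : t ≠ x) :
    jacobiCoeff r x s y t z
      = 1 / 4 * ((if x = y ∧ y = z then 1 else 0) - if r = s ∧ s = t then 1 else 0) := by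
  have cyclic_sum := chordPairing_cyclic_sum (cutSign_antisymm 0) r x s y t z
  have hxyt : ¬(x = y ∧ y = t) := fun h => htx (h.1.trans h.2).symm
  have hyzr : ¬(y = z ∧ z = r) := fun h => hry (h.1.trans h.2).symm
  have hzxs : ¬(z = x ∧ x = s) := fun h => hsz (h.1.trans h.2).symm
  simp only [triangleSum_cutSign, hsz, hry, htx, hxyt, hyzr, hzxs, false_and, if_false]
    at cyclic_sum
  simp only [jacobiCoeff, linkQ_eq_chordPairing 0]
  linear_combination 1 / 4 * cyclic_sum

end LinkingNumber

section SwappingRing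

variable {K : Type} [Field K] {P : Set Circle1}

lemma gen_self (x : P) : gen K P x x = 0 := by simp [gen]

lemma gen_of_ne {x y : P} (h : x ≠ y) : gen K P x y = X ⟨(x, y), h⟩ := by simp [gen, h]

lemma X_eq_gen (g : SwapIdx P) : (X g : SwapRing K P) = gen K P g.1.1 g.1.2 :=
  (gen_of_ne g.2).symm

/-- The swapping bracket as a biderivation. -/
def swapBiderivation (K : Type) [Field K] (P : Set Circle1) (c1 c2 : K) :
    Biderivation K (SwapRing K P) :=
  mkDerivation K fun g => mkDerivation K (genBr K P c1 c2 g)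

lemma swapBr_eq_swapBiderivation (c1 c2 : K) (a b : SwapRing K P) :
    swapBr K P c1 c2 a b = swapBiderivation K P c1 c2 a b := by
  have agree : mkDerivation K (fun g => mkDerivation K (genBr K P c1 c2 g) b)
      = (swapBiderivation K P c1 c2).flip b :=
    derivation_ext fun g => by
      rw [Biderivation.flip_apply, swapBiderivation, mkDerivation_X, mkDerivation_X]
  exact congr($agree a)

/-- The linking number as a constant of the swapping ring. -/
def linkConst (K : Type) [Field K] {P : Set Circle1} (r x s y : P) : SwapRing K P :=
  C (linkQ r x s y : K)

lemma swapBiderivation_gen_gen (c1 c2 : K) (r x s y : P) :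
    swapBiderivation K P c1 c2 (gen K P r x) (gen K P s y)
      = linkConst K r x s y
        * (C c1 * (gen K P r y * gen K P s x) + C c2 * (gen K P r x * gen K P s y)) := by
  rcases eq_or_ne r x with rfl | hrx
  · simp [gen_self, linkConst, linkQ_self_left]
  rcases eq_or_ne s y with rfl | hsy
  · simp [gen_self, linkConst, linkQ_self_right]
  · rw [gen_of_ne hrx, gen_of_ne hsy, swapBiderivation, mkDerivation_X, mkDerivation_X, genBr,
      ← gen_of_ne hrx, ← gen_of_ne hsy]
    simp only [smul_eq_C_mul, linkConst]

lemma linkConst_antisymm (r x s y : P) : linkConst K r x s y = -linkConst K s y r x := by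
  rw [linkConst, linkConst, linkQ_antisymm, Rat.cast_neg, C_neg]

lemma swapBiderivation_flip (c1 c2 : K) :
    (swapBiderivation K P c1 c2).flip = -swapBiderivation K P c1 c2 :=
  Biderivation.mvPolynomial_ext fun g h => by
    rw [Biderivation.flip_apply, Derivation.neg_apply, Derivation.neg_apply, X_eq_gen, X_eq_gen,
      swapBiderivation_gen_gen, swapBiderivation_gen_gen, linkConst_antisymm]
    ring

lemma jacobiCoeff_mul_gen (r x s y t z : P) :
    C (jacobiCoeff r x s y t z : K) * (gen K P s z * gen K P r y * gen K P t x)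
      = C ((1 / 4 * ((if x = y ∧ y = z then 1 else 0) - if r = s ∧ s = t then 1 else 0) : ℚ) : K)
        * (gen K P s z * gen K P r y * gen K P t x) := by
  rcases eq_or_ne s z with rfl | hsz
  · simp only [gen_self, zero_mul, mul_zero]
  rcases eq_or_ne r y with rfl | hry
  · simp only [gen_self, zero_mul, mul_zero]
  rcases eq_or_ne t x with rfl | htx
  · simp only [gen_self, mul_zero]
  rw [jacobiCoeff_eq_of_ne (Subtype.coe_ne_coe.2 hsz) (Subtype.coe_ne_coe.2 hry)
    (Subtype.coe_ne_coe.2 htx)]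
  simp only [Subtype.coe_inj]

lemma jacobiCoeff_mul_gen_swap (r x s y t z : P) :
    C (jacobiCoeff r x s y t z : K) * (gen K P s z * gen K P r y * gen K P t x)
      = C (jacobiCoeff r x t z s y : K) * (gen K P t y * gen K P r z * gen K P s x) := by
  rw [jacobiCoeff_mul_gen, jacobiCoeff_mul_gen]
  have swap_yz : (x = z ∧ z = y) = (x = y ∧ y = z) := by grind
  have swap_st : (r = t ∧ t = s) = (r = s ∧ s = t) := by grind
  simp only [swap_yz, swap_st]
  by_cases hxyz : x = y ∧ y = z
  · obtain ⟨rfl, rfl⟩ := hxyz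
    ring
  by_cases hrst : r = s ∧ s = t
  · obtain ⟨rfl, rfl⟩ := hrst
    ring
  simp [hxyz, hrst]

variable [CharZero K]

lemma linkConst_add_linkConst_swap (r x s y t z : P) :
    linkConst K r x t y + linkConst K r x s z = linkConst K r x t z + linkConst K r x s y := by
  simp only [linkConst, ← C_add, ← Rat.cast_add, linkQ_add_linkQ_swap]

lemma jacobiator_swapBiderivation_gen (c1 c2 : K) (r x s y t z : P) :
    (swapBiderivation K P c1 c2).jacobiator (gen K P r x) (gen K P s y) (gen K P t z) = 0 := by
  have constants (a : SwapRing K P) (p q u v : P) :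
      swapBiderivation K P c1 c2 a (linkConst K p q u v) = 0 := derivation_C _ _
  simp only [Biderivation.jacobiator, swapBiderivation_gen_gen, Derivation.leibniz, map_add,
    derivation_C, constants, smul_eq_mul]
  have quadratic := jacobiCoeff_mul_gen_swap (K := K) r x s y t z
  simp only [jacobiCoeff, Rat.cast_add, Rat.cast_mul, C_add, C_mul, ← linkConst.eq_def] at quadratic
  have mixed_rx := linkConst_add_linkConst_swap (K := K) r x s y t z
  have mixed_sy := linkConst_add_linkConst_swap (K := K) s y t z r x
  have mixed_tz := linkConst_add_linkConst_swap (K := K) t z r x s y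
  rw [linkConst_antisymm r x t z] at mixed_rx quadratic ⊢
  rw [linkConst_antisymm s y r x] at mixed_sy quadratic ⊢
  rw [linkConst_antisymm t z s y] at mixed_tz quadratic ⊢
  linear_combination C c1 ^ 2 * quadratic + C c1 * C c2 *
    (linkConst K s y t z * gen K P r x * gen K P s z * gen K P t y * mixed_rx
    + linkConst K t z r x * gen K P s y * gen K P t x * gen K P r z * mixed_sy
    + linkConst K r x s y * gen K P t z * gen K P r y * gen K P s x * mixed_tz)

lemma jacobiator_swapBiderivation (c1 c2 : K) (a b c : SwapRing K P) :
    (swapBiderivation K P c1 c2).jacobiator a b c = 0 :=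
  Biderivation.jacobiator_eq_zero_of_X (swapBiderivation_flip c1 c2)
    (fun g h k => by
      rw [X_eq_gen, X_eq_gen, X_eq_gen, jacobiator_swapBiderivation_gen]) a b c

end SwappingRing

/-- For every `c1, c2 ∈ K`, the `(c1,c2)`-swapping bracket on `Z(P)` is a
Poisson bracket: it is antisymmetric, a derivation (Leibniz rule) in each argument, and it
satisfies the Jacobi identity. -/
theorem swapping_bracket_is_poisson (K : Type) [Field K] [CharZero K]
    (P : Set Circle1) (c1 c2 : K) :
    (∀ a b : SwapRing K P, swapBr K P c1 c2 a b = - swapBr K P c1 c2 b a) ∧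
    (∀ a b c : SwapRing K P,
      swapBr K P c1 c2 (a * b) c
        = a * swapBr K P c1 c2 b c + b * swapBr K P c1 c2 a c) ∧
    (∀ a b c : SwapRing K P,
      swapBr K P c1 c2 a (b * c)
        = b * swapBr K P c1 c2 a c + c * swapBr K P c1 c2 a b) ∧
    (∀ a b c : SwapRing K P,
      swapBr K P c1 c2 a (swapBr K P c1 c2 b c)
        + swapBr K P c1 c2 b (swapBr K P c1 c2 c a)
        + swapBr K P c1 c2 c (swapBr K P c1 c2 a b) = 0) := by
  simp only [swapBr_eq_swapBiderivation]
  refine ⟨fun a b => ?_, fun a b c => ?_, fun a b c => ?_, jacobiator_swapBiderivation c1 c2⟩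
  · exact congr($(swapBiderivation_flip c1 c2) b a)
  · rw [Derivation.leibniz, Derivation.add_apply, Derivation.smul_apply, Derivation.smul_apply,
      smul_eq_mul, smul_eq_mul]
  · rw [Derivation.leibniz, smul_eq_mul, smul_eq_mul]

end
end

section
/- For any four points r, x, s, y ∈ S^1, the linking number J(rx,sy) belongs to the set {0, 1, −1, 1/2, −1/2}, and its value does not depend on the choice of the removed point o ∈ S^1 \ {r,x,s,y} used to identify S^1 \ {o} with (0,1). -/
noncomputable section

open scoped Classical
open MvPolynomial

set_option maxHeartbeats 1000000
set_option synthInstance.maxHeartbeats 400000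

/-!
Moving the cut point from `o` to `o'` multiplies each sign `△(p − q)` by `ε p * ε q`, where `ε p` is
`-1` if the coordinate of `p` wraps around and `1` otherwise. In the product of the three signs
attached to a triple of points every `ε` occurs twice, so the product is unchanged. The linking
number is half the difference of two such products, each of which is `-1`, `0` or `1`.
-/

open Set SignType

section LinearOrder

variable {α : Type*} [LinearOrder α]

/-- The sign picked up by the coordinate `a` when the cut of the circle is moved from `0` to `d`:
`-1` if `a` lies before the new cut, and so moves past the coordinates after it, and `1` if not. -/
def wrapSign (d a : α) : SignType := if a < d then -1 else 1

lemma wrapSign_mul_self (d a : α) : wrapSign d a * wrapSign d a = 1 := by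
  unfold wrapSign
  split_ifs <;> rfl

end LinearOrder

section OrderedGroup

variable {α : Type*} [AddCommGroup α] [LinearOrder α]

/-- The orientation of the triple `(a, b, c)`: the sign of the permutation that sorts it into
decreasing order, and `0` if two of the entries coincide. -/
def orientationSign (a b c : α) : SignType := sign (a - c) * sign (a - b) * sign (b - c)

lemma orientationSign_eq_of_sign_sub_eq {ι : Type*} {f g : ι → α} {ε : ι → SignType}
    (hε : ∀ i, ε i * ε i = 1) (hfg : ∀ i j, sign (g i - g j) = ε i * ε j * sign (f i - f j))
    (i j k : ι) : orientationSign (g i) (g j) (g k) = orientationSign (f i) (f j) (f k) := by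
  unfold orientationSign
  calc
    _ = (ε i * ε i) * (ε j * ε j) * (ε k * ε k)
          * (sign (f i - f k) * sign (f i - f j) * sign (f j - f k)) := by
      simp only [hfg]
      ac_rfl
    _ = _ := by simp only [hε, one_mul]

/-- The coordinate `a ∈ [0, p)` on a circle of length `p`, moved to the interval `[d, d + p)`
(for `d` in `[0, p)`). -/
def wrap (p d a : α) : α := if a < d then a + p else a

lemma coe_wrap (p d a : α) : ((wrap p d a : α) : AddCircle p) = a := by
  unfold wrap
  split_ifs <;> simp

variable [IsOrderedAddMonoid α] {p : α}

lemma wrap_mem_Ico {d a : α} (hd : d ∈ Ico 0 p) (ha : a ∈ Ico 0 p) :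
    wrap p d a ∈ Ico d (d + p) := by
  obtain ⟨hd₀, hdp⟩ := hd
  obtain ⟨ha₀, hap⟩ := ha
  unfold wrap
  split_ifs <;> constructor <;> grind

lemma sign_wrap_sub_wrap (d : α) {a b : α} (ha : a ∈ Ico 0 p) (hb : b ∈ Ico 0 p) :
    sign (wrap p d a - wrap p d b) = wrapSign d a * wrapSign d b * sign (a - b) := by
  obtain ⟨ha₀, hap⟩ := ha
  obtain ⟨hb₀, hbp⟩ := hb
  unfold wrap wrapSign
  split_ifs with had hbd hbd
  · simp
  · have hab : a < b := had.trans_le (not_lt.mp hbd)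
    have hwrap : b < a + p := by grind
    simp [sign_pos (sub_pos.mpr hwrap), sign_neg (sub_neg.mpr hab)]
  · have hba : b < a := hbd.trans_le (not_lt.mp had)
    have hwrap : a < b + p := by grind
    simp [sign_neg (sub_neg.mpr hwrap), sign_pos (sub_pos.mpr hba)]
  · simp

variable [Archimedean α] [Fact (0 < p)]

/-- The representative in `[0, p)` of a point of the circle of length `p`. -/
def icoRep (u : AddCircle p) : α := AddCircle.equivIco p 0 u

lemma icoRep_mem_Ico (u : AddCircle p) : icoRep u ∈ Ico 0 p := by
  simpa only [icoRep, zero_add] using (AddCircle.equivIco p 0 u).2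

lemma coe_icoRep (u : AddCircle p) : ((icoRep u : α) : AddCircle p) = u :=
  AddCircle.coe_equivIco

lemma icoRep_sub (u d : AddCircle p) :
    icoRep (u - d) = wrap p (icoRep d) (icoRep u) - icoRep d := by
  have hmem : wrap p (icoRep d) (icoRep u) - icoRep d ∈ Ico 0 (0 + p) := by
    obtain ⟨hle, hlt⟩ := wrap_mem_Ico (icoRep_mem_Ico d) (icoRep_mem_Ico u)
    exact ⟨sub_nonneg.mpr hle, by rwa [zero_add, sub_lt_iff_lt_add']⟩
  have hcoe : ((wrap p (icoRep d) (icoRep u) - icoRep d : α) : AddCircle p) = u - d := by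
    rw [AddCircle.coe_sub, coe_wrap, coe_icoRep, coe_icoRep]
  rw [← AddCircle.equivIco_coe_of_mem hmem, hcoe, icoRep]

lemma sign_icoRep_sub_sub_icoRep_sub (d u v : AddCircle p) :
    sign (icoRep (u - d) - icoRep (v - d)) =
      wrapSign (icoRep d) (icoRep u) * wrapSign (icoRep d) (icoRep v)
        * sign (icoRep u - icoRep v) := by
  rw [icoRep_sub u, icoRep_sub v, sub_sub_sub_cancel_right,
    sign_wrap_sub_wrap _ (icoRep_mem_Ico u) (icoRep_mem_Ico v)]

lemma orientationSign_icoRep_sub (d u v w : AddCircle p) :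
    orientationSign (icoRep (u - d)) (icoRep (v - d)) (icoRep (w - d)) =
      orientationSign (icoRep u) (icoRep v) (icoRep w) :=
  orientationSign_eq_of_sign_sub_eq (fun _ ↦ wrapSign_mul_self _ _)
    (sign_icoRep_sub_sub_icoRep_sub d) u v w

end OrderedGroup

lemma half_mul_sub_signType_mem {K : Type*} [Field K] [NeZero (2 : K)] (a b : SignType) :
    (1 / 2 : K) * (a - b) ∈ ({0, 1, -1, 1 / 2, -1 / 2} : Set K) := by
  have two_ne : (2 : K) ≠ 0 := two_ne_zero
  rcases a.trichotomy with rfl | rfl | rfl <;> rcases b.trichotomy with rfl | rfl | rfl <;>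
    simp only [SignType.coe_zero, SignType.coe_one, coe_neg_one, mem_insert_iff,
      mem_singleton_iff] <;> grind

lemma sgnQ_eq_sign (a : ℝ) : sgnQ a = sign a := by
  rcases lt_trichotomy a 0 with ha | rfl | ha
  · simp [sgnQ, ha]
  · simp [sgnQ]
  · simp [sgnQ, ha, ha.not_gt, ha.ne']

lemma linkingAt_eq_half_mul_orientationSign_sub (o r x s y : Circle1) :
    linkingAt o r x s y =
      1 / 2 * ((orientationSign (coordAt o r) (coordAt o y) (coordAt o x) : ℚ)
        - orientationSign (coordAt o r) (coordAt o s) (coordAt o x)) := by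
  simp only [linkingAt, orientationSign, sgnQ_eq_sign, SignType.coe_mul]

lemma orientationSign_coordAt (o u v w : Circle1) :
    orientationSign (coordAt o u) (coordAt o v) (coordAt o w) =
      orientationSign (icoRep u) (icoRep v) (icoRep w) :=
  orientationSign_icoRep_sub o u v w

/-- For any four points `r, x, s, y` of the circle, the linking number
`J(rx, sy)` belongs to `{0, 1, -1, 1/2, -1/2}`, and its value does not depend on the choice
of the removed cut point `o ∉ {r, x, s, y}`. -/
theorem linking_number_values_and_independence (r x s y o o' : Circle1)
    (ho : o ≠ r ∧ o ≠ x ∧ o ≠ s ∧ o ≠ y)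
    (ho' : o' ≠ r ∧ o' ≠ x ∧ o' ≠ s ∧ o' ≠ y) :
    linkingAt o r x s y ∈ ({0, 1, -1, 1/2, -1/2} : Set ℚ) ∧
    linkingAt o r x s y = linkingAt o' r x s y := by
  constructor
  · rw [linkingAt_eq_half_mul_orientationSign_sub]
    exact half_mul_sub_signType_mem _ _
  · simp only [linkingAt_eq_half_mul_orientationSign_sub, orientationSign_coordAt]

end
end

section
/- Let n > 1 and let x_1,…,x_n, y_1,…,y_n ∈ P be such that x_1,…,x_n are pairwise distinct and y_1,…,y_n are pairwise distinct. Then Δ((x_1,…,x_n),(y_1,…,y_n)) ≠ 0 in the rank n swapping ring Z_n(P). -/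
noncomputable section

open scoped Classical
open MvPolynomial

set_option maxHeartbeats 1000000
set_option synthInstance.maxHeartbeats 400000

/-!
The ideal `R_n(P)` is generated by forms of degree `n + 1`, so a nonzero form of degree at most `n`
survives in `Z_n(P)`. It thus suffices that `Δ` is nonzero in the polynomial ring `Z(P)`. Since the
`x_i` and the `y_j` are pairwise distinct and there are at least two of each, some permutation `σ`
satisfies `x_i ≠ y_{σ i}` for all `i`; sending each generator `x_i y_{σ i}` to `1` and all the other
generators to `0` then turns `(x_i y_j)` into a permutation matrix.
-/

lemma exists_perm_forall_ne {ι α : Type*} [Finite ι] [Nontrivial ι] {x y : ι → α}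
    (hx : Function.Injective x) (hy : Function.Injective y) :
    ∃ σ : Equiv.Perm ι, ∀ i, x i ≠ y (σ i) := by
  have := Fintype.ofFinite ι
  -- Hall's condition: no `j` is excluded by two distinct indices, and no `i` excludes every `j`.
  have hall (s : Finset ι) : s.card ≤ (Finset.univ.filter fun j => ∃ i ∈ s, x i ≠ y j).card := by
    rcases Nat.lt_or_ge 1 s.card with one_lt | le_one
    · obtain ⟨i, hi, i', hi', hne⟩ := Finset.one_lt_card.mp one_lt
      have all_admissible (j : ι) : ∃ i ∈ s, x i ≠ y j := by
        by_contra! h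
        exact hne (hx ((h i hi).trans (h i' hi').symm))
      simpa [all_admissible] using s.card_le_univ
    · rcases s.eq_empty_or_nonempty with rfl | ⟨i, hi⟩
      · simp
      · obtain ⟨j, hj⟩ := hy.exists_ne (x i)
        exact le_one.trans (Finset.card_pos.mpr ⟨j, by simpa using ⟨i, hi, hj.symm⟩⟩)
  obtain ⟨f, hf, hne⟩ :=
    (Fintype.all_card_le_filter_rel_iff_exists_injective fun i j => x i ≠ y j).mp hall
  exact ⟨Equiv.ofBijective f (Finite.injective_iff_bijective.mp hf), hne⟩

section Homogeneous

variable {σ R ι : Type*}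

lemma isHomogeneous_det [CommRing R] [Fintype ι] [DecidableEq ι] {d : ℕ}
    {A : Matrix ι ι (MvPolynomial σ R)} (hA : ∀ i j, (A i j).IsHomogeneous d) :
    A.det.IsHomogeneous (Fintype.card ι * d) := by
  rw [Matrix.det_apply]
  refine IsHomogeneous.sum _ _ _ fun τ _ => ?_
  have hprod : (∏ i, A (τ i) i).IsHomogeneous (Fintype.card ι * d) := by
    simpa using IsHomogeneous.prod Finset.univ (fun i => A (τ i) i) _ fun i _ => hA (τ i) i
  rcases Int.units_eq_one_or (Equiv.Perm.sign τ) with h | h <;> rw [h]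
  · simpa using hprod
  · simpa using hprod.neg

lemma mem_pow_idealOfVars_iff_of_isHomogeneous [CommSemiring R] {p : MvPolynomial σ R} {m n : ℕ}
    (hp : p.IsHomogeneous m) : p ∈ idealOfVars σ R ^ n ↔ p = 0 ∨ n ≤ m := by
  have degree_eq : ∀ d ∈ p.support, d.degree = m := fun d hd =>
    (hp.degree_eq_sum_deg_support hd).symm
  rw [mem_pow_idealOfVars_iff, forall₂_congr fun d hd => by rw [degree_eq d hd]]
  rcases eq_or_ne p 0 with rfl | hp0
  · simp
  · obtain ⟨d, hd⟩ := support_nonempty.mpr hp0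
    exact ⟨fun h => .inr (h d hd), fun h _ _ => h.resolve_left hp0⟩

end Homogeneous

section SwappingRing

variable {K : Type} [Field K] {P : Set Circle1} {m n : ℕ}

lemma isHomogeneous_gen (x y : P) : (gen K P x y).IsHomogeneous 1 := by
  unfold gen
  split_ifs
  · exact isHomogeneous_X K _
  · exact isHomogeneous_zero _ K 1

lemma isHomogeneous_dmat (xs ys : Fin m → P) : (Dmat K P m xs ys).IsHomogeneous m := by
  simpa only [Dmat, Fintype.card_fin, mul_one] using
    isHomogeneous_det (A := Matrix.of fun i j => gen K P (xs i) (ys j))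
      fun i j => isHomogeneous_gen (xs i) (ys j)

lemma rideal_le_pow_idealOfVars : Rideal K P n ≤ idealOfVars (SwapIdx P) K ^ (n + 1) := by
  refine Ideal.span_le.mpr ?_
  rintro _ ⟨xs, ys, rfl⟩
  exact (mem_pow_idealOfVars_iff_of_isHomogeneous (isHomogeneous_dmat xs ys)).mpr (.inr le_rfl)

lemma toZn_ne_zero_of_isHomogeneous {p : SwapRing K P} (hp : p.IsHomogeneous m) (hmn : m ≤ n)
    (hp0 : p ≠ 0) : toZn K P n p ≠ 0 := by
  intro h
  have hmem : p ∈ idealOfVars (SwapIdx P) K ^ (n + 1) :=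
    rideal_le_pow_idealOfVars (Ideal.Quotient.eq_zero_iff_mem.mp h)
  have hlt : n + 1 ≤ m :=
    ((mem_pow_idealOfVars_iff_of_isHomogeneous hp).mp hmem).resolve_left hp0
  omega

lemma eval_gen {A : Matrix P P K} (hA : ∀ x, A x x = 0) (x y : P) :
    eval (fun g : SwapIdx P => A g.1.1 g.1.2) (gen K P x y) = A x y := by
  rcases eq_or_ne x y with rfl | hxy
  · simp [gen, hA]
  · simp [gen, hxy]

lemma eval_dmat {A : Matrix P P K} (hA : ∀ x, A x x = 0) (xs ys : Fin m → P) :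
    eval (fun g : SwapIdx P => A g.1.1 g.1.2) (Dmat K P m xs ys) = (A.submatrix xs ys).det := by
  rw [Dmat, RingHom.map_det]
  congr 1
  ext i j
  exact eval_gen hA (xs i) (ys j)

lemma dmat_ne_zero_of_forall_ne {xs ys : Fin m → P} (hx : Function.Injective xs)
    (hy : Function.Injective ys) (σ : Equiv.Perm (Fin m)) (hσ : ∀ i, xs i ≠ ys (σ i)) :
    Dmat K P m xs ys ≠ 0 := by
  let A : Matrix P P K := .of fun x y => if ∃ i, xs i = x ∧ ys (σ i) = y then 1 else 0
  have hA (x : P) : A x x = 0 :=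
    if_neg fun ⟨i, hxi, hyi⟩ => hσ i (hxi.trans hyi.symm)
  have submatrix_eq : A.submatrix xs ys = σ.permMatrix K := by
    ext i j
    simp [A, hx.eq_iff, hy.eq_iff, PEquiv.toMatrix_apply]
  have eval_eq := eval_dmat hA xs ys
  rw [submatrix_eq, Matrix.det_permutation] at eval_eq
  intro h0
  rw [h0, map_zero] at eval_eq
  exact ((Equiv.Perm.sign σ).isUnit.map (Int.castRingHom K)).ne_zero eval_eq.symm

lemma dmat_ne_zero (hm : 2 ≤ m) {xs ys : Fin m → P} (hx : Function.Injective xs)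
    (hy : Function.Injective ys) : Dmat K P m xs ys ≠ 0 := by
  have : Nontrivial (Fin m) := Fin.nontrivial_iff_two_le.mpr hm
  obtain ⟨σ, hσ⟩ := exists_perm_forall_ne hx hy
  exact dmat_ne_zero_of_forall_ne hx hy σ hσ

end SwappingRing

theorem determinant_ne_zero_general (K : Type) [Field K] (P : Set Circle1)
    {m n : ℕ} (hm : 2 ≤ m) (hmn : m ≤ n) {xs ys : Fin m → P}
    (hx : Function.Injective xs) (hy : Function.Injective ys) :
    toZn K P n (Dmat K P m xs ys) ≠ 0 :=
  toZn_ne_zero_of_isHomogeneous (isHomogeneous_dmat xs ys) hmn (dmat_ne_zero hm hx hy)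

/-- For `n > 1` and pairwise distinct `x_1, …, x_n ∈ P` and pairwise
distinct `y_1, …, y_n ∈ P`, the determinant `Δ((x_1,…,x_n),(y_1,…,y_n))` is nonzero in the
rank `n` swapping ring `Z_n(P)`. -/
theorem determinant_ne_zero (K : Type) [Field K] [CharZero K] (P : Set Circle1)
    (n : ℕ) (hn : 2 ≤ n) (xs ys : Fin n → ↥P)
    (hx : Function.Injective xs) (hy : Function.Injective ys) :
    toZn K P n (Dmat K P n xs ys) ≠ 0 :=
  determinant_ne_zero_general K P hn le_rfl hx hy

end
end
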